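/- Fix 𝔠 > 0, K ≥ 1 and let H, H⁺ be as in the context. There exists a constant C, depending only on 𝔠 and K, such that for all integers N ≥ 2, all μ ≥ 0, all integers n ≥ 1 and all k_{1:n} ∈ (ℤ²∖{0})ⁿ, | ∫_{ℝ²} (𝒦^N_{xN, k_1−xN})² · (μ_N + Γ(x)·H⁺(L^N(N²Γ_1(x)))) / (μ_N + Γ(x)·H(L^N(N²Γ_1(x))))² dx − ∫_{ℝ²} (𝒦^N_{Nx, −Nx})² · H⁺(L^N(N²Γ_2(x))) / (Γ_2(x)(Γ_2(x)+1)·H(L^N(N²Γ_2(x)))²) dx | ≤ C. -/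

import Mathlib

/-!
Write `κ = k₁/N`, `m = μ_N`, and let `A`, `B` be the two integrands stripped of their squared
kernels `𝒦₁²`, `𝒦₂²`. Each integral may grow like `log N`, and the claim is that the divergences
cancel. On the support of the kernels `Γ₁, Γ₂ ≥ N⁻²`, so the arguments of `H` and `H⁺` stay in
`[0, 2𝔠]`, where both functions are bounded by `K` and `K`-Lipschitz; moreover
`γ ↦ L^N(N² γ)` is `𝔠/t`-Lipschitz on `[t, ∞)`, and `Γ₁`, `Γ₂` are comparable to each other.

* Removing `m` from the first fraction costs `O(m / Γ₁²)`; passing from `Γ₁` to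
  `Γ₂ = Γ₁ + x·κ` costs `O(|x| |κ| / Γ₂²)`; inserting the factor `Γ₂ + 1` costs `O(1)`
  (`fraction_sub_le`).
* `|𝒦₁² − 𝒦₂²| ≤ 4 |κ| / |x|` where both kernels are active (`angular_sub_le`), and
  `B ≤ K / Γ₂`.
* If only the second kernel is active, then `|κ − x| < 1/N`, a disc of area `O(N⁻²)` on which
  `B ≤ K N²`, or `Γ₂ ≥ 1/4`.

All unbounded errors are multiples of `J_a(|x|)`, where `J_a(s) = a / (s (s² + a²))` and
`a = |κ|` or `a = √m`. By scaling, the integral of `J_a(|x|)` over the plane does not depend on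
`a > 0`, and it is finite since `∫ dr / (1 + r²) < ∞` (`integral_prof_le`). Integrating the
pointwise bound `pointwise_le` gives the result; integrability of both integrands follows from the
same domination (`abs_integral_sub_le`). As `J_a` is decreasing, the Euclidean norm `|x|` may be
replaced by the sup norm `‖x‖ ≤ |x|` that `ℝ × ℝ` carries.
-/

/-- Embedding of the lattice `ℤ²` into `ℝ²`. -/
def latR (l : ℤ × ℤ) : ℝ × ℝ := ((l.1 : ℝ), (l.2 : ℝ))

/-- Squared Euclidean norm `|ℓ|²` of a lattice point. -/
noncomputable def nsq (l : ℤ × ℤ) : ℝ := (l.1 : ℝ) ^ 2 + (l.2 : ℝ) ^ 2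

/-- Squared Euclidean norm `|x|²` on `ℝ²`. -/
noncomputable def rnsq (x : ℝ × ℝ) : ℝ := x.1 ^ 2 + x.2 ^ 2

/-- `c(x,y) = x₂ y₂ − x₁ y₁`. -/
noncomputable def cfun (x y : ℝ × ℝ) : ℝ := x.2 * y.2 - x.1 * y.1

open Classical in
/-- The kernel `𝒦^N_{x,y} = (1/2π) · c(x,y)/(|x||y|) · 1_{1 ≤ |x| ≤ N, 1 ≤ |y| ≤ N, |x+y| ≤ N}`,
vanishing if `x = 0` or `y = 0`. -/
noncomputable def Kker (N : ℕ) (x y : ℝ × ℝ) : ℝ :=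
  if x ≠ 0 ∧ y ≠ 0 ∧ 1 ≤ Real.sqrt (rnsq x) ∧ Real.sqrt (rnsq x) ≤ N ∧
      1 ≤ Real.sqrt (rnsq y) ∧ Real.sqrt (rnsq y) ≤ N ∧ Real.sqrt (rnsq (x + y)) ≤ N then
    (1 / (2 * Real.pi)) * (cfun x y / (Real.sqrt (rnsq x) * Real.sqrt (rnsq y)))
  else 0

/-- `L^N(x) = (𝔠 / log(N²)) · log(1 + N²/x)`. -/
noncomputable def LN (c : ℝ) (N : ℕ) (x : ℝ) : ℝ :=
  c / Real.log ((N : ℝ) ^ 2) * Real.log (1 + (N : ℝ) ^ 2 / x)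

/-- `Γ(x) = ½ (|x|² + |k₁/N − x|² + β_N)` with `β_N = tail/N²`. -/
noncomputable def Gam (N : ℕ) (k1 : ℤ × ℤ) (tail : ℝ) (x : ℝ × ℝ) : ℝ :=
  (rnsq x + rnsq (((N : ℝ))⁻¹ • latR k1 - x) + tail / (N : ℝ) ^ 2) / 2

/-- `Γ₁(x) = μ_N + Γ(x)` with `μ_N = μ/N²`. -/
noncomputable def Gam1 (N : ℕ) (μ : ℝ) (k1 : ℤ × ℤ) (tail : ℝ) (x : ℝ × ℝ) : ℝ :=
  μ / (N : ℝ) ^ 2 + Gam N k1 tail x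

/-- `Γ₂(x) = |x|² + α_N` with `α_N = μ/N² + |k_{1:n}|²/(2N²)`. -/
noncomputable def Gam2 (N : ℕ) (μ fullsq : ℝ) (x : ℝ × ℝ) : ℝ :=
  rnsq x + (μ / (N : ℝ) ^ 2 + fullsq / (2 * (N : ℝ) ^ 2))

open MeasureTheory

/-! ### The radial profile dominating the logarithmically critical errors -/

/-- The profile `J_a(s) = a / (s (s² + a²))`. The integral of `J_a(‖x‖)` over `ℝ²` is invariant
under `a ↦ λ a` (`λ > 0`), hence bounded uniformly in `a ≥ 0`. At `s = 0` it takes the junk value `0`. -/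
noncomputable def prof (a s : ℝ) : ℝ := a / (s * (s ^ 2 + a ^ 2))

lemma prof_nonneg {a s : ℝ} (ha : 0 ≤ a) (hs : 0 ≤ s) : 0 ≤ prof a s := by
  unfold prof; positivity

lemma prof_anti {a s t : ℝ} (ha : 0 ≤ a) (hs : 0 < s) (hst : s ≤ t) : prof a t ≤ prof a s := by
  have ht : 0 < t := hs.trans_le hst
  unfold prof; gcongr

/-- In polar coordinates for the sup norm this is the integrability of `1 / (1 + y²)`. -/
lemma integrable_prof_one : Integrable (fun x : ℝ × ℝ => prof 1 ‖x‖) := by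
  rw [integrable_fun_norm_addHaar (volume : Measure (ℝ × ℝ)) (f := prof 1)]
  refine (integrable_inv_one_add_sq.integrableOn (s := Set.Ioi 0)).congr_fun ?_ measurableSet_Ioi
  intro y hy
  have hy : 0 < y := hy
  simp only [prof, Module.finrank_prod, Module.finrank_self, smul_eq_mul]
  norm_num
  field_simp
  ring

/-- Scaling `x = a y` turns the profile of parameter `a` into the one of parameter `1`. -/
lemma prof_scale {a : ℝ} (ha : 0 < a) (x : ℝ × ℝ) :
    prof a ‖x‖ = (a ^ 2)⁻¹ * prof 1 ‖a⁻¹ • x‖ := by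
  rw [norm_smul, Real.norm_of_nonneg (inv_nonneg.2 ha.le)]
  rcases eq_or_ne x 0 with rfl | hx
  · simp [prof]
  · have : 0 < ‖x‖ := norm_pos_iff.2 hx
    unfold prof
    field_simp

lemma integrable_prof {a : ℝ} (ha : 0 ≤ a) : Integrable (fun x : ℝ × ℝ => prof a ‖x‖) := by
  rcases ha.eq_or_lt with rfl | ha
  · simp [prof]
  · simp_rw [prof_scale ha]
    exact (integrable_prof_one.comp_smul (inv_ne_zero ha.ne')).const_mul _

lemma integral_prof_le {a : ℝ} (ha : 0 ≤ a) :
    ∫ x : ℝ × ℝ, prof a ‖x‖ ≤ ∫ x : ℝ × ℝ, prof 1 ‖x‖ := by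
  rcases ha.eq_or_lt with rfl | ha
  · have h : 0 ≤ ∫ x : ℝ × ℝ, prof 1 ‖x‖ :=
      integral_nonneg fun x => prof_nonneg zero_le_one (norm_nonneg x)
    simpa [prof] using h
  · simp_rw [prof_scale ha]
    rw [integral_const_mul,
      Measure.integral_comp_smul volume (fun x : ℝ × ℝ => prof 1 ‖x‖) a⁻¹]
    simp only [Module.finrank_prod, Module.finrank_self, smul_eq_mul]
    norm_num
    rw [← mul_assoc, inv_mul_cancel₀ (by positivity), one_mul]

/-! ### Euclidean geometry of the plane -/

lemma rnsq_nonneg (x : ℝ × ℝ) : 0 ≤ rnsq x := by unfold rnsq; positivity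

lemma rnsq_smul (t : ℝ) (x : ℝ × ℝ) : rnsq (t • x) = t ^ 2 * rnsq x := by
  simp only [rnsq, Prod.smul_fst, Prod.smul_snd, smul_eq_mul]; ring

lemma sqrt_rnsq_smul {t : ℝ} (ht : 0 ≤ t) (x : ℝ × ℝ) :
    √(rnsq (t • x)) = t * √(rnsq x) := by
  rw [rnsq_smul, Real.sqrt_mul (sq_nonneg t), Real.sqrt_sq ht]

/-- `‖x‖` is the sup norm of `ℝ × ℝ`; this comparison lets all integrals be taken of functions
of `‖x‖`. -/
lemma norm_le_sqrt_rnsq (x : ℝ × ℝ) : ‖x‖ ≤ √(rnsq x) := by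
  rw [Prod.norm_def]
  refine max_le ?_ ?_ <;> refine Real.abs_le_sqrt ?_ <;> unfold rnsq <;>
    nlinarith [sq_nonneg x.1, sq_nonneg x.2]

lemma abs_cfun_le (x y : ℝ × ℝ) : |cfun x y| ≤ √(rnsq x) * √(rnsq y) := by
  rw [← Real.sqrt_mul (rnsq_nonneg x)]
  refine Real.abs_le_sqrt ?_
  unfold rnsq cfun
  nlinarith [sq_nonneg (x.1 * y.2 + x.2 * y.1)]

lemma abs_dot_le (x y : ℝ × ℝ) : |x.1 * y.1 + x.2 * y.2| ≤ √(rnsq x) * √(rnsq y) := by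
  rw [← Real.sqrt_mul (rnsq_nonneg x)]
  refine Real.abs_le_sqrt ?_
  unfold rnsq
  nlinarith [sq_nonneg (x.1 * y.2 - x.2 * y.1)]

/-- The reverse triangle inequality `| |x| − |κ − x| | ≤ |κ|`. -/
lemma abs_sub_sqrt_rnsq_le (κ x : ℝ × ℝ) :
    |√(rnsq x) - √(rnsq (κ - x))| ≤ √(rnsq κ) := by
  have h := abs_le.1 (abs_dot_le x (κ - x))
  have h1 := Real.sq_sqrt (rnsq_nonneg x)
  have h2 := Real.sq_sqrt (rnsq_nonneg (κ - x))
  refine Real.abs_le_sqrt ?_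
  have h3 : rnsq κ = rnsq x + rnsq (κ - x) + 2 * (x.1 * (κ - x).1 + x.2 * (κ - x).2) := by
    simp only [rnsq, Prod.fst_sub, Prod.snd_sub]; ring
  nlinarith

/-- Changing `-x` into `κ − x` alters the squared angular factor by at most `4 |κ| / |x|`. -/
lemma angular_sub_le (κ x : ℝ × ℝ) (hx : 0 < √(rnsq x)) (hy : 0 < √(rnsq (κ - x))) :
    |(cfun x (κ - x) / (√(rnsq x) * √(rnsq (κ - x)))) ^ 2 -
      (cfun x (-x) / (√(rnsq x) * √(rnsq (-x)))) ^ 2| ≤ 4 * √(rnsq κ) / √(rnsq x) := by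
  have hneg : rnsq (-x) = rnsq x := by simp [rnsq]
  have habs : ∀ y : ℝ × ℝ, |cfun x y / (√(rnsq x) * √(rnsq y))| ≤ 1 := fun y => by
    rw [abs_div, abs_of_nonneg (a := √(rnsq x) * √(rnsq y)) (by positivity)]
    exact div_le_one_of_le₀ (abs_cfun_le x y) (by positivity)
  have h1 := habs (κ - x)
  have h2 := habs (-x)
  rw [hneg] at h2 ⊢
  have hc := abs_cfun_le x (κ - x)
  have hk := abs_cfun_le x κ
  have ht := abs_sub_sqrt_rnsq_le κ x
  have hadd : cfun x (κ - x) - cfun x (-x) = cfun x κ := by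
    simp only [cfun, Prod.fst_sub, Prod.snd_sub, Prod.fst_neg, Prod.snd_neg]; ring
  set a := √(rnsq x)
  set b := √(rnsq (κ - x))
  set e := √(rnsq κ)
  set u := cfun x (κ - x)
  set v := cfun x (-x)
  have hd : |u / (a * b) - v / (a * a)| ≤ 2 * e / a := by
    have : u / (a * b) - v / (a * a) = (u * (a - b) + b * (u - v)) / (a ^ 2 * b) := by
      field_simp; ring
    rw [this, abs_div, abs_of_pos (a := a ^ 2 * b) (by positivity),
      div_le_div_iff₀ (by positivity) hx]
    have : |u * (a - b) + b * (u - v)| ≤ (a * b) * e + b * (a * e) := by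
      refine (abs_add_le _ _).trans (add_le_add ?_ ?_)
      · rw [abs_mul]; gcongr
      · rw [abs_mul, abs_of_pos hy, hadd]; gcongr
    nlinarith
  rw [sq_sub_sq, abs_mul]
  calc _ ≤ 2 * (2 * e / a) := by
        gcongr
        exact (abs_add_le _ _).trans (by linarith)
    _ = _ := by ring

/-! ### The logarithmic argument -/

lemma one_le_log_sq {N : ℕ} (hN : 2 ≤ N) : 1 ≤ Real.log ((N : ℝ) ^ 2) := by
  have h2 : (2 : ℝ) ≤ N := by exact_mod_cast hN
  have : Real.log 2 ≤ Real.log N := Real.log_le_log (by norm_num) h2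
  rw [Real.log_pow]
  have := Real.log_two_gt_d9
  push_cast
  linarith

lemma LN_nonneg {c : ℝ} (hc : 0 ≤ c) {N : ℕ} (hN : 2 ≤ N) {y : ℝ} (hy : 0 ≤ y) :
    0 ≤ LN c N y := by
  have := one_le_log_sq hN
  have : 0 ≤ (N : ℝ) ^ 2 / y := by positivity
  unfold LN
  exact mul_nonneg (by positivity) (Real.log_nonneg (by linarith))

/-- Since `1 + N² ≤ N⁴`, the argument stays in `[0, 2𝔠]` as long as `γ ≥ N⁻²`. -/
lemma LN_mem {c : ℝ} (hc : 0 ≤ c) {N : ℕ} (hN : 2 ≤ N) {γ : ℝ} (hγ : 1 ≤ (N : ℝ) ^ 2 * γ) :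
    LN c N ((N : ℝ) ^ 2 * γ) ∈ Set.Icc 0 (2 * c) := by
  refine ⟨LN_nonneg hc hN (by linarith), ?_⟩
  have hl := one_le_log_sq hN
  have h2 : (2 : ℝ) ≤ N := by exact_mod_cast hN
  have h4 : (4 : ℝ) ≤ (N : ℝ) ^ 2 := by nlinarith
  have hq : (N : ℝ) ^ 2 / ((N : ℝ) ^ 2 * γ) ≤ (N : ℝ) ^ 2 :=
    div_le_self (by positivity) hγ
  have hq0 : 0 ≤ (N : ℝ) ^ 2 / ((N : ℝ) ^ 2 * γ) := by positivity
  have : Real.log (1 + (N : ℝ) ^ 2 / ((N : ℝ) ^ 2 * γ)) ≤ 2 * Real.log ((N : ℝ) ^ 2) := by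
    have h := Real.log_le_log (x := 1 + (N : ℝ) ^ 2 / ((N : ℝ) ^ 2 * γ))
      (y := ((N : ℝ) ^ 2) ^ 2) (by linarith) (by nlinarith)
    rwa [Real.log_pow _ 2] at h
  unfold LN
  rw [div_mul_eq_mul_div, div_le_iff₀ (by linarith)]
  nlinarith

/-- `γ ↦ L^N(N² γ)` is Lipschitz with constant `𝔠 / t` on `[t, ∞)`. -/
lemma LN_lip {c : ℝ} (hc : 0 ≤ c) {N : ℕ} (hN : 2 ≤ N) {t γ δ : ℝ} (ht : 0 < t)
    (h1 : t ≤ γ) (h2 : t ≤ δ) :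
    t * |LN c N ((N : ℝ) ^ 2 * γ) - LN c N ((N : ℝ) ^ 2 * δ)| ≤ c * |γ - δ| := by
  wlog h : γ ≤ δ generalizing γ δ
  · rw [abs_sub_comm, abs_sub_comm γ]
    exact this h2 h1 (le_of_not_ge h)
  have hl := one_le_log_sq hN
  have hN0 : (N : ℝ) ≠ 0 := by positivity
  have hγ : 0 < γ := ht.trans_le h1
  have hδ : 0 < δ := ht.trans_le h2
  have e : ∀ z : ℝ, 0 < z → (N : ℝ) ^ 2 / ((N : ℝ) ^ 2 * z) = 1 / z := fun z hz => by
    field_simp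
  unfold LN
  rw [e γ hγ, e δ hδ, ← mul_sub, abs_mul, abs_of_nonneg (a := c / _) (by positivity)]
  have hlog : |Real.log (1 + 1 / γ) - Real.log (1 + 1 / δ)| ≤ |γ - δ| / t := by
    rw [abs_sub_comm γ, abs_of_nonneg (sub_nonneg.2 h), abs_of_nonneg, ← Real.log_div
      (by positivity) (by positivity)]
    · refine (Real.log_le_sub_one_of_pos (by positivity)).trans ?_
      have : (1 + 1 / γ) / (1 + 1 / δ) - 1 = (δ - γ) / (γ * (δ + 1)) := by
        field_simp; ring
      rw [this]
      have : 0 ≤ δ - γ := by linarith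
      gcongr
      nlinarith
    · rw [sub_nonneg]
      gcongr
  calc _ ≤ t * (c / 1 * (|γ - δ| / t)) := by gcongr
    _ = _ := by field_simp

/-- Mean value inequality on `[0, T]` from a bound on the one-sided derivative. -/
lemma lip_of_derivWithin {F : ℝ → ℝ} {K T : ℝ}
    (hd : ∀ y ∈ Set.Ici (0:ℝ), DifferentiableWithinAt ℝ F (Set.Ici 0) y)
    (hb : ∀ y ∈ Set.Icc (0:ℝ) T, |derivWithin F (Set.Ici 0) y| ≤ K)
    {u v : ℝ} (hu : u ∈ Set.Icc 0 T) (hv : v ∈ Set.Icc 0 T) : |F u - F v| ≤ K * |u - v| :=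
  Convex.norm_image_sub_le_of_norm_hasDerivWithin_le
    (fun y hy => ((hd y hy.1).hasDerivWithinAt).mono Set.Icc_subset_Ici_self) hb
    (convex_Icc 0 T) hv hu

/-! ### Comparison of the two fractions -/

/-- The two integrands without their kernels, at `Γ = g`, `Γ₁ = m + g`, `Γ₂ = g₂`. -/
lemma fraction_sub_le {K M m g g2 d p1 p2 q1 q2 : ℝ} (hm : 0 ≤ m) (hg : 0 < g)
    (hg2 : 0 < g2) (h4 : g2 ≤ 4 * (m + g)) (hd : |m + g - g2| ≤ d)
    (hp1 : 0 ≤ p1) (hp1' : p1 ≤ K) (hp2 : 0 ≤ p2) (hp2' : p2 ≤ K)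
    (hq1 : 1 ≤ q1) (hq1' : q1 ≤ K) (hq2 : 1 ≤ q2) (hq2' : q2 ≤ K)
    (hp : g2 * |p1 - p2| ≤ 4 * M * d) (hq : g2 * |q1 - q2| ≤ 4 * M * d) :
    |(m + g * p1) / (m + g * q1) ^ 2 - p2 / (g2 * (g2 + 1) * q2 ^ 2)| ≤
      6 * K ^ 3 * (m / (m + g) ^ 2) + (4 * K + 12 * K ^ 2 * M) * (d / g2 ^ 2) + K := by
  have hK : 1 ≤ K := hq1.trans hq1'
  have hg1 : 0 < m + g := by linarith
  have hA : m + g ≤ m + g * q1 := by nlinarith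
  have hd0 : 0 ≤ d := (abs_nonneg _).trans hd
  -- removal of `m` from numerator and denominator
  have s1 : |(m + g * p1) / (m + g * q1) ^ 2 - p1 / ((m + g) * q1 ^ 2)| ≤
      6 * K ^ 3 * (m / (m + g) ^ 2) := by
    have hnum : |m * (m * (q1 ^ 2 - p1) + g * (q1 ^ 2 + p1 * q1 ^ 2 - 2 * p1 * q1))| ≤
        m * ((m + g) * (6 * K ^ 3)) := by
      rw [abs_mul, abs_of_nonneg hm]
      have hq1sq : q1 ^ 2 ≤ K ^ 2 := by gcongr
      have hK2 : K ≤ K ^ 2 := by nlinarith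
      have hK3 : K ^ 2 ≤ K ^ 3 := by nlinarith [sq_nonneg K]
      have hpq : p1 * q1 ^ 2 ≤ K * K ^ 2 := by gcongr
      have hpq0 : 0 ≤ p1 * q1 ^ 2 := by positivity
      have hpp : p1 * q1 ≤ K * K := by gcongr
      have hpp0 : 0 ≤ p1 * q1 := by positivity
      have b1 : |q1 ^ 2 - p1| ≤ 6 * K ^ 3 := abs_le.2 ⟨by nlinarith, by nlinarith⟩
      have b2 : |q1 ^ 2 + p1 * q1 ^ 2 - 2 * p1 * q1| ≤ 6 * K ^ 3 :=
        abs_le.2 ⟨by nlinarith, by nlinarith⟩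
      gcongr
      refine (abs_add_le _ _).trans ?_
      rw [abs_mul, abs_mul, abs_of_nonneg hm, abs_of_pos hg, add_mul]
      gcongr
    have heq : (m + g * p1) / (m + g * q1) ^ 2 - p1 / ((m + g) * q1 ^ 2) =
        m * (m * (q1 ^ 2 - p1) + g * (q1 ^ 2 + p1 * q1 ^ 2 - 2 * p1 * q1)) /
          ((m + g * q1) ^ 2 * ((m + g) * q1 ^ 2)) := by
      have : m + g * q1 ≠ 0 := by positivity
      field_simp; ring
    rw [heq, abs_div, abs_of_nonneg (a := (m + g * q1) ^ 2 * _) (by positivity)]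
    calc _ ≤ m * ((m + g) * (6 * K ^ 3)) / ((m + g) ^ 2 * ((m + g) * 1)) := by
          gcongr
          nlinarith
      _ = _ := by field_simp
  -- replacement of `Γ₁` by `Γ₂`
  have s2 : |p1 / ((m + g) * q1 ^ 2) - p2 / (g2 * q2 ^ 2)| ≤
      (4 * K + 12 * K ^ 2 * M) * (d / g2 ^ 2) := by
    have heq : p1 / ((m + g) * q1 ^ 2) - p2 / (g2 * q2 ^ 2) =
        p1 * (g2 - (m + g)) / ((m + g) * g2 * q1 ^ 2) +
          ((p1 - p2) * q2 ^ 2 - p2 * ((q1 - q2) * (q1 + q2))) / (g2 * (q1 ^ 2 * q2 ^ 2)) := by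
      field_simp; ring
    have t1 : |p1 * (g2 - (m + g)) / ((m + g) * g2 * q1 ^ 2)| ≤ 4 * K * (d / g2 ^ 2) := by
      rw [abs_div, abs_mul, abs_of_nonneg hp1, abs_sub_comm,
        abs_of_nonneg (a := (m + g) * g2 * q1 ^ 2) (by positivity)]
      calc _ ≤ K * d / (g2 / 4 * g2 * 1) := by
            gcongr
            · linarith
            · nlinarith
        _ = _ := by field_simp
    have t2 : |((p1 - p2) * q2 ^ 2 - p2 * ((q1 - q2) * (q1 + q2))) /
        (g2 * (q1 ^ 2 * q2 ^ 2))| ≤ 12 * K ^ 2 * M * (d / g2 ^ 2) := by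
      rw [abs_div, abs_of_nonneg (a := g2 * (q1 ^ 2 * q2 ^ 2)) (by positivity)]
      have hp' : |p1 - p2| ≤ 4 * M * d / g2 := by rw [le_div_iff₀ hg2]; linarith
      have hq' : |q1 - q2| ≤ 4 * M * d / g2 := by rw [le_div_iff₀ hg2]; linarith
      have hs : |q1 + q2| ≤ 2 * K := by rw [abs_of_nonneg (by linarith)]; linarith
      have hMd : 0 ≤ 4 * M * d / g2 := (abs_nonneg _).trans hp'
      have hnum : |(p1 - p2) * q2 ^ 2 - p2 * ((q1 - q2) * (q1 + q2))| ≤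
          4 * M * d / g2 * K ^ 2 + K * (4 * M * d / g2 * (2 * K)) := by
        refine (abs_sub _ _).trans (add_le_add ?_ ?_)
        · rw [abs_mul, abs_of_nonneg (a := q2 ^ 2) (by positivity)]; gcongr
        · rw [abs_mul, abs_mul, abs_of_nonneg hp2]; gcongr
      calc _ ≤ (4 * M * d / g2 * K ^ 2 + K * (4 * M * d / g2 * (2 * K))) / (g2 * (1 * 1)) := by
            gcongr
            · nlinarith
            · nlinarith
        _ = _ := by field_simp; ring
    rw [heq, add_mul (4 * K)]
    exact (abs_add_le _ _).trans (add_le_add t1 t2)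
  -- restoring the factor `Γ₂ + 1` costs a bounded amount
  have s3 : |p2 / (g2 * q2 ^ 2) - p2 / (g2 * (g2 + 1) * q2 ^ 2)| ≤ K := by
    have heq : p2 / (g2 * q2 ^ 2) - p2 / (g2 * (g2 + 1) * q2 ^ 2) =
        p2 / ((g2 + 1) * q2 ^ 2) := by field_simp; ring
    rw [heq, abs_of_nonneg (by positivity)]
    exact (div_le_self hp2 (by nlinarith)).trans hp2'
  have := abs_le.1 s1
  have := abs_le.1 s2
  have := abs_le.1 s3
  exact abs_le.2 ⟨by linarith, by linarith⟩

/-! ### The kernel -/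

/-- The support condition of `𝒦^N_{Nx,Ny}` in the rescaled variables. -/
def Adm (N : ℕ) (x y : ℝ × ℝ) : Prop :=
  1 ≤ N * √(rnsq x) ∧ √(rnsq x) ≤ 1 ∧ 1 ≤ N * √(rnsq y) ∧ √(rnsq y) ≤ 1 ∧ √(rnsq (x + y)) ≤ 1

lemma Kker_cond_iff {N : ℕ} (hN : 0 < N) (x y : ℝ × ℝ) :
    ((N : ℝ) • x ≠ 0 ∧ (N : ℝ) • y ≠ 0 ∧ 1 ≤ √(rnsq ((N : ℝ) • x)) ∧
      √(rnsq ((N : ℝ) • x)) ≤ N ∧ 1 ≤ √(rnsq ((N : ℝ) • y)) ∧ √(rnsq ((N : ℝ) • y)) ≤ N ∧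
      √(rnsq ((N : ℝ) • x + (N : ℝ) • y)) ≤ N) ↔ Adm N x y := by
  have hN' : (0 : ℝ) < N := by exact_mod_cast hN
  have hle : ∀ a : ℝ, (N : ℝ) * a ≤ N ↔ a ≤ 1 := fun a => mul_le_iff_le_one_right hN'
  rw [← smul_add]
  simp only [sqrt_rnsq_smul hN'.le, hle, Adm]
  refine ⟨fun h => h.2.2, fun h => ⟨?_, ?_, h⟩⟩
  · rintro h0
    have hx : x = 0 := (smul_eq_zero.1 h0).resolve_left hN'.ne'
    have := h.1
    norm_num [hx, rnsq] at this
  · rintro h0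
    have hx : y = 0 := (smul_eq_zero.1 h0).resolve_left hN'.ne'
    have := h.2.2.1
    norm_num [hx, rnsq] at this

lemma Kker_smul_of_adm {N : ℕ} (hN : 0 < N) {x y : ℝ × ℝ} (h : Adm N x y) :
    Kker N ((N : ℝ) • x) ((N : ℝ) • y) =
      (1 / (2 * Real.pi)) * (cfun x y / (√(rnsq x) * √(rnsq y))) := by
  have hN' : (0 : ℝ) < N := by exact_mod_cast hN
  unfold Kker
  rw [if_pos ((Kker_cond_iff hN x y).2 h), sqrt_rnsq_smul hN'.le, sqrt_rnsq_smul hN'.le]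
  have : cfun ((N : ℝ) • x) ((N : ℝ) • y) = (N * N : ℝ) * cfun x y := by
    simp only [cfun, Prod.smul_fst, Prod.smul_snd, smul_eq_mul]; ring
  rw [this, mul_mul_mul_comm, mul_div_mul_left _ _ (by positivity)]

lemma Kker_smul_of_not_adm {N : ℕ} (hN : 0 < N) {x y : ℝ × ℝ} (h : ¬ Adm N x y) :
    Kker N ((N : ℝ) • x) ((N : ℝ) • y) = 0 := by
  unfold Kker
  rw [if_neg (mt (Kker_cond_iff hN x y).1 h)]

lemma inv_two_pi_sq_le : (1 / (2 * Real.pi)) ^ 2 ≤ 1 := by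
  have := Real.pi_gt_three
  refine pow_le_one₀ (by positivity) ?_
  rw [div_le_one (by positivity)]
  linarith

lemma Kker_sq_le_one (N : ℕ) (x y : ℝ × ℝ) : Kker N x y ^ 2 ≤ 1 := by
  unfold Kker
  split_ifs
  · rw [mul_pow, div_pow (cfun x y)]
    refine mul_le_one₀ inv_two_pi_sq_le (by positivity) (div_le_one_of_le₀ ?_ (by positivity))
    exact sq_le_sq' (abs_le.1 (abs_cfun_le x y)).1 (abs_le.1 (abs_cfun_le x y)).2
  · norm_num

lemma adm_neg_iff (N : ℕ) (x : ℝ × ℝ) :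
    Adm N x (-x) ↔ 1 ≤ N * √(rnsq x) ∧ √(rnsq x) ≤ 1 := by
  have hneg : rnsq (-x) = rnsq x := by simp [rnsq]
  have h0 : rnsq (x + -x) = 0 := by simp [rnsq]
  rw [Adm, hneg, h0]
  simp
  tauto

lemma measurable_rnsq : Measurable rnsq := by unfold rnsq; fun_prop

lemma measurable_Kker (N : ℕ) : Measurable fun p : (ℝ × ℝ) × (ℝ × ℝ) => Kker N p.1 p.2 := by
  have hr := measurable_rnsq
  have h1 : Measurable fun p : (ℝ × ℝ) × (ℝ × ℝ) => √(rnsq p.1) := by fun_prop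
  have h2 : Measurable fun p : (ℝ × ℝ) × (ℝ × ℝ) => √(rnsq p.2) := by fun_prop
  have h3 : Measurable fun p : (ℝ × ℝ) × (ℝ × ℝ) => √(rnsq (p.1 + p.2)) := by fun_prop
  unfold Kker
  refine Measurable.ite ?_ ?_ measurable_const
  · refine ((measurableSet_eq_fun measurable_fst measurable_const).compl).inter
      (((measurableSet_eq_fun measurable_snd measurable_const).compl).inter
      ((measurableSet_le measurable_const h1).inter ((measurableSet_le h1 measurable_const).inter
      ((measurableSet_le measurable_const h2).inter ((measurableSet_le h2 measurable_const).inter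
      (measurableSet_le h3 measurable_const))))))
  · unfold cfun
    fun_prop

/-! ### The pointwise estimate -/

/-- Integrable majorant of the difference of the two integrands: a bounded part, the part coming
from the small disc `|κ − x| < 1/N` removed from the first integral only, and the two profiles
at the scales `|κ|` and `√m`. -/
noncomputable def domi (N : ℕ) (κ : ℝ × ℝ) (m : ℝ) (x : ℝ × ℝ) : ℝ :=
  (Metric.closedBall (0 : ℝ × ℝ) 1).indicator (fun _ => 1) x +
    (Metric.closedBall κ (N : ℝ)⁻¹).indicator (fun _ => (N : ℝ) ^ 2) x +
    prof (√(rnsq κ)) ‖x‖ + prof (√m) ‖x‖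

lemma integrable_domi (N : ℕ) (κ : ℝ × ℝ) (m : ℝ) : Integrable (domi N κ m) := by
  unfold domi
  refine ((Integrable.add ?_ ?_).add (integrable_prof (Real.sqrt_nonneg _))).add
    (integrable_prof (Real.sqrt_nonneg _))
  all_goals
    refine (integrable_indicator_iff Metric.isClosed_closedBall.measurableSet).2 ?_
    exact integrableOn_const (measure_closedBall_lt_top.ne)

lemma integral_domi_le {N : ℕ} (hN : 0 < N) (κ : ℝ × ℝ) (m : ℝ) :
    ∫ x, domi N κ m x ≤ 2 * volume.real (Metric.ball (0 : ℝ × ℝ) 1) +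
      2 * ∫ x : ℝ × ℝ, prof 1 ‖x‖ := by
  have hN' : (0 : ℝ) < N := by exact_mod_cast hN
  have i1 : Integrable (fun x => (Metric.closedBall (0 : ℝ × ℝ) 1).indicator (fun _ => (1:ℝ)) x) :=
    (integrable_indicator_iff Metric.isClosed_closedBall.measurableSet).2
      (integrableOn_const (measure_closedBall_lt_top.ne))
  have i2 : Integrable
      (fun x => (Metric.closedBall κ (N : ℝ)⁻¹).indicator (fun _ => (N : ℝ) ^ 2) x) :=
    (integrable_indicator_iff Metric.isClosed_closedBall.measurableSet).2
      (integrableOn_const (measure_closedBall_lt_top.ne))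
  have i3 := integrable_prof (Real.sqrt_nonneg (rnsq κ))
  have i4 := integrable_prof (Real.sqrt_nonneg m)
  have hsum : ∫ x, domi N κ m x = _ :=
    (integral_add ((i1.add i2).add i3) i4).trans <| congrArg₂ (· + ·)
      ((integral_add (i1.add i2) i3).trans <| congrArg₂ (· + ·) (integral_add i1 i2) rfl) rfl
  rw [hsum, integral_indicator Metric.isClosed_closedBall.measurableSet,
    integral_indicator Metric.isClosed_closedBall.measurableSet,
    setIntegral_const, setIntegral_const,
    Measure.addHaar_real_closedBall _ _ zero_le_one,
    Measure.addHaar_real_closedBall _ _ (inv_nonneg.2 hN'.le)]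
  have h3 := integral_prof_le (Real.sqrt_nonneg (rnsq κ))
  have h4 := integral_prof_le (Real.sqrt_nonneg m)
  have : ((N : ℝ)⁻¹ ^ Module.finrank ℝ (ℝ × ℝ) * volume.real (Metric.ball (0 : ℝ × ℝ) 1)) •
      (N : ℝ) ^ 2 = volume.real (Metric.ball (0 : ℝ × ℝ) 1) := by
    simp only [Module.finrank_prod, Module.finrank_self, smul_eq_mul]
    norm_num
    field_simp
  rw [this]
  simp only [one_pow, one_mul, smul_eq_mul, mul_one]
  linarith

/-- The second fraction is at most `K / Γ₂`. -/
lemma fraction_two_le {K g2 p2 q2 : ℝ} (hg2 : 0 < g2) (hp2 : 0 ≤ p2) (hp2' : p2 ≤ K)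
    (hq2 : 1 ≤ q2) : p2 / (g2 * (g2 + 1) * q2 ^ 2) ≤ K / g2 := by
  have hK : 0 ≤ K := hp2.trans hp2'
  have : 1 ≤ q2 ^ 2 := one_le_pow₀ hq2
  gcongr
  nlinarith [mul_pos hg2 hg2]

/-- By `2 a √m ≤ a² + m`, the critical error `m / Γ₁²` is dominated by a profile. -/
lemma div_sq_le_prof {m a G : ℝ} (hm : 0 ≤ m) (ha : 0 < a) (hG : (a ^ 2 + m) / 2 ≤ G) :
    m / G ^ 2 ≤ 2 * prof (√m) a := by
  obtain ⟨s, hs, rfl⟩ : ∃ s, 0 ≤ s ∧ m = s ^ 2 := ⟨√m, Real.sqrt_nonneg m, (Real.sq_sqrt hm).symm⟩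
  rw [Real.sqrt_sq hs]
  calc s ^ 2 / G ^ 2 ≤ s ^ 2 / ((a ^ 2 + s ^ 2) / 2) ^ 2 := by gcongr
    _ ≤ 2 * prof s a := by
      unfold prof
      rw [mul_div_assoc', div_le_div_iff₀ (by positivity) (by positivity)]
      have h0 : s * (a ^ 2 + s ^ 2) * (a - s) ^ 2 ≥ 0 := by positivity
      nlinarith

/-- The error `|x| |κ| / Γ₂²` coming from `|Γ₁ − Γ₂| = |x·κ|` is dominated by a profile. -/
lemma mul_div_sq_le_prof {e a G : ℝ} (he : 0 ≤ e) (ha : 0 < a) (hG : (a ^ 2 + e ^ 2) / 2 ≤ G) :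
    a * e / G ^ 2 ≤ 4 * prof e a := by
  calc a * e / G ^ 2 ≤ a * e / ((a ^ 2 + e ^ 2) / 2) ^ 2 := by gcongr
    _ ≤ 4 * prof e a := by
      unfold prof
      rw [mul_div_assoc', div_le_div_iff₀ (by positivity) (by positivity)]
      have h0 : 0 ≤ e * (a ^ 2 + e ^ 2) * e ^ 2 := by positivity
      nlinarith

/-- `|x|² + |κ|²/2 ≤ 2 (|x|² + |κ − x|²)`, whence `Γ₂ ≤ 4 Γ₁`. -/
lemma parallelogram_le (κ x : ℝ × ℝ) :
    rnsq x + rnsq κ / 2 ≤ 2 * (rnsq x + rnsq (κ - x)) := by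
  simp only [rnsq, Prod.fst_sub, Prod.snd_sub]
  nlinarith [sq_nonneg (2 * x.1 - κ.1), sq_nonneg (2 * x.2 - κ.2), sq_nonneg x.1, sq_nonneg x.2,
    sq_nonneg (3 * κ.1 - 4 * x.1), sq_nonneg (3 * κ.2 - 4 * x.2)]

set_option maxHeartbeats 1000000 in
/-- The integrands differ by at most a constant times `domi`. With both kernels active the
difference is `𝒦₁² (A − B) + (𝒦₁² − 𝒦₂²) B`, estimated by `fraction_sub_le` and `angular_sub_le`.
Where only the second kernel is active, either `|κ − x| < 1/N`, so the trivial bound `K N²` on a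
disc of area of order `N⁻²` suffices, or `Γ₂ ≥ 1/4`. -/
lemma pointwise_le {N : ℕ} (hN : 2 ≤ N) (κ x : ℝ × ℝ) {K M m β g g2 : ℝ} (hK : 1 ≤ K)
    (hM : 0 ≤ M) (hm : 0 ≤ m) (hβ : 0 ≤ β) {P Q : ℝ → ℝ}
    (hP : ∀ γ, 1 ≤ (N : ℝ) ^ 2 * γ → 0 ≤ P γ ∧ P γ ≤ K)
    (hQ : ∀ γ, 1 ≤ (N : ℝ) ^ 2 * γ → 1 ≤ Q γ ∧ Q γ ≤ K)
    (hPl : ∀ t γ δ, 0 < t → t ≤ γ → t ≤ δ → 1 ≤ (N : ℝ) ^ 2 * γ → 1 ≤ (N : ℝ) ^ 2 * δ →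
      t * |P γ - P δ| ≤ M * |γ - δ|)
    (hQl : ∀ t γ δ, 0 < t → t ≤ γ → t ≤ δ → 1 ≤ (N : ℝ) ^ 2 * γ → 1 ≤ (N : ℝ) ^ 2 * δ →
      t * |Q γ - Q δ| ≤ M * |γ - δ|)
    (hg : g = (rnsq x + rnsq (κ - x) + β) / 2)
    (hg2 : g2 = rnsq x + (m + (rnsq κ + β) / 2)) :
    |Kker N ((N : ℝ) • x) ((N : ℝ) • (κ - x)) ^ 2 *
        ((m + g * P (m + g)) / (m + g * Q (m + g)) ^ 2) -
      Kker N ((N : ℝ) • x) ((N : ℝ) • (-x)) ^ 2 * (P g2 / (g2 * (g2 + 1) * Q g2 ^ 2))| ≤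
      (12 * K ^ 3 + 24 * K + 48 * K ^ 2 * M) * domi N κ m x := by
  have hN0 : 0 < N := by omega
  have hN' : (0 : ℝ) < N := by exact_mod_cast hN0
  have hi1 : 0 ≤ (Metric.closedBall (0 : ℝ × ℝ) 1).indicator (fun _ => (1:ℝ)) x :=
    Set.indicator_nonneg (fun _ _ => zero_le_one) x
  have hi2 : 0 ≤ (Metric.closedBall κ (N : ℝ)⁻¹).indicator (fun _ => (N : ℝ) ^ 2) x :=
    Set.indicator_nonneg (fun _ _ => by positivity) x
  have hj3 := prof_nonneg (Real.sqrt_nonneg (rnsq κ)) (norm_nonneg x)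
  have hj4 := prof_nonneg (Real.sqrt_nonneg m) (norm_nonneg x)
  have hC1 : 0 ≤ K ^ 2 * M := by positivity
  have hC2 : 0 ≤ K ^ 3 := by positivity
  have hsa := Real.sq_sqrt (rnsq_nonneg x)
  have hsb := Real.sq_sqrt (rnsq_nonneg (κ - x))
  have hse := Real.sq_sqrt (rnsq_nonneg κ)
  have hna := norm_le_sqrt_rnsq x
  have hnb := norm_le_sqrt_rnsq (κ - x)
  have htri := abs_le.1 (abs_sub_sqrt_rnsq_le κ x)
  have hea := Real.sqrt_nonneg (rnsq κ)
  have hb0 := Real.sqrt_nonneg (rnsq (κ - x))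
  by_cases hx : 1 ≤ N * √(rnsq x) ∧ √(rnsq x) ≤ 1
  swap
  · rw [Kker_smul_of_not_adm hN0 (x := x) (y := κ - x) fun h => hx ⟨h.1, h.2.1⟩,
      Kker_smul_of_not_adm hN0 (mt (adm_neg_iff N x).1 hx)]
    norm_num
    unfold domi
    positivity
  have ha : 0 < √(rnsq x) := by
    by_contra h
    nlinarith [hx.1, Real.sqrt_nonneg (rnsq x)]
  have hx0 : 0 < ‖x‖ := by
    rw [norm_pos_iff]
    rintro rfl
    simp [rnsq] at ha
  have hball : (Metric.closedBall (0 : ℝ × ℝ) 1).indicator (fun _ => (1:ℝ)) x = 1 :=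
    Set.indicator_of_mem (by simpa using hna.trans hx.2) _
  have hNa : 1 ≤ (N : ℝ) ^ 2 * rnsq x := by
    rw [← hsa, ← mul_pow]; exact one_le_pow₀ hx.1
  have hg2a : rnsq x ≤ g2 := by
    rw [hg2]; linarith [rnsq_nonneg κ]
  have hra : 0 < rnsq x := Real.sqrt_pos.1 ha
  have hg2p : 0 < g2 := hra.trans_le hg2a
  have hNg2 : 1 ≤ (N : ℝ) ^ 2 * g2 := hNa.trans (by gcongr)
  obtain ⟨hp2, hp2'⟩ := hP g2 hNg2
  obtain ⟨hq2, hq2'⟩ := hQ g2 hNg2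
  have hB := fraction_two_le hg2p hp2 hp2' hq2
  have hB0 : 0 ≤ P g2 / (g2 * (g2 + 1) * Q g2 ^ 2) := by positivity
  have hadm2 := (adm_neg_iff N x).2 hx
  by_cases hadm : Adm N x (κ - x)
  · -- both kernels are active
    have hb : 0 < √(rnsq (κ - x)) := by
      by_contra h
      nlinarith [hadm.2.2.1]
    have hNb : 1 ≤ (N : ℝ) ^ 2 * rnsq (κ - x) := by
      rw [← hsb, ← mul_pow]; exact one_le_pow₀ hadm.2.2.1
    have hgp : 0 < g := by rw [hg]; linarith [rnsq_nonneg (κ - x)]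
    have hNg1 : 1 ≤ (N : ℝ) ^ 2 * (m + g) := by
      have : 0 ≤ (N : ℝ) ^ 2 * m := by positivity
      have : 0 ≤ (N : ℝ) ^ 2 * β := by positivity
      rw [hg]; nlinarith
    obtain ⟨hp1, hp1'⟩ := hP _ hNg1
    obtain ⟨hq1, hq1'⟩ := hQ _ hNg1
    have hcos := abs_dot_le x κ
    have hdiff : m + g - g2 = -(x.1 * κ.1 + x.2 * κ.2) := by
      rw [hg, hg2]; simp only [rnsq, Prod.fst_sub, Prod.snd_sub]; ring
    have hd : |m + g - g2| ≤ √(rnsq x) * √(rnsq κ) := by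
      rwa [hdiff, abs_neg]
    have h4 : g2 ≤ 4 * (m + g) := by
      have := parallelogram_le κ x
      rw [hg, hg2]; linarith
    have hp := hPl (g2 / 4) (m + g) g2 (by positivity) (by linarith) (by linarith) hNg1 hNg2
    have hq := hQl (g2 / 4) (m + g) g2 (by positivity) (by linarith) (by linarith) hNg1 hNg2
    have hMd : M * |m + g - g2| ≤ M * (√(rnsq x) * √(rnsq κ)) := by gcongr
    have hfrac := fraction_sub_le (M := M) hm hgp hg2p h4 hd hp1 hp1' hp2 hp2' hq1 hq1' hq2 hq2'
      (by linarith) (by linarith)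
    have hang := angular_sub_le κ x ha hb
    have hJm := div_sq_le_prof (G := m + g) hm ha (by
      rw [hg, hsa]; linarith [rnsq_nonneg (κ - x)])
    have hJe := mul_div_sq_le_prof (G := g2) hea ha (by
      rw [hg2, hsa, hse]; linarith [rnsq_nonneg x])
    have hJm' := prof_anti (Real.sqrt_nonneg m) hx0 hna
    have hJe' := prof_anti hea hx0 hna
    have hk1 := Kker_sq_le_one N ((N : ℝ) • x) ((N : ℝ) • (κ - x))
    have hkd : |Kker N ((N : ℝ) • x) ((N : ℝ) • (κ - x)) ^ 2 -
        Kker N ((N : ℝ) • x) ((N : ℝ) • (-x)) ^ 2| ≤ 4 * √(rnsq κ) / √(rnsq x) := by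
      rw [Kker_smul_of_adm hN0 hadm, Kker_smul_of_adm hN0 hadm2, mul_pow, mul_pow, ← mul_sub,
        abs_mul, abs_of_nonneg (a := (1 / (2 * Real.pi)) ^ 2) (by positivity)]
      exact (mul_le_of_le_one_left (abs_nonneg _) inv_two_pi_sq_le).trans hang
    have hkB : 4 * √(rnsq κ) / √(rnsq x) * (P g2 / (g2 * (g2 + 1) * Q g2 ^ 2)) ≤
        8 * K * prof (√(rnsq κ)) (√(rnsq x)) := by
      calc _ ≤ 4 * √(rnsq κ) / √(rnsq x) *
            (K / ((√(rnsq x) ^ 2 + √(rnsq κ) ^ 2) / 2)) := by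
            refine mul_le_mul_of_nonneg_left (hB.trans ?_) (by positivity)
            gcongr
            rw [hg2, hsa, hse]; linarith [rnsq_nonneg x]
        _ = _ := by unfold prof; field_simp; ring
    have hsplit : ∀ k1 k2 A B : ℝ, k1 * A - k2 * B = k1 * (A - B) + (k1 - k2) * B := by
      intros; ring
    rw [hsplit]
    refine (abs_add_le _ _).trans ?_
    rw [abs_mul, abs_mul, abs_of_nonneg hB0, abs_of_nonneg (sq_nonneg (Kker N _ _))]
    have t1 := (mul_le_of_le_one_left (abs_nonneg _) hk1).trans hfrac
    have t2 := (mul_le_mul_of_nonneg_right hkd hB0).trans hkB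
    refine (add_le_add t1 t2).trans ?_
    have u1 : 6 * K ^ 3 * (m / (m + g) ^ 2) ≤ 6 * K ^ 3 * (2 * prof (√m) ‖x‖) := by
      gcongr; linarith
    have u2 : (4 * K + 12 * K ^ 2 * M) * (√(rnsq x) * √(rnsq κ) / g2 ^ 2) ≤
        (4 * K + 12 * K ^ 2 * M) * (4 * prof (√(rnsq κ)) ‖x‖) := by
      gcongr; linarith
    have u3 : 8 * K * prof (√(rnsq κ)) (√(rnsq x)) ≤ 8 * K * prof (√(rnsq κ)) ‖x‖ := by
      gcongr
    refine (add_le_add (add_le_add (add_le_add u1 u2) le_rfl) u3).trans ?_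
    unfold domi
    rw [hball]
    set j3 := prof (√(rnsq κ)) ‖x‖
    set j4 := prof (√m) ‖x‖
    set i2 := (Metric.closedBall κ (N : ℝ)⁻¹).indicator (fun _ => (N : ℝ) ^ 2) x
    have v1 : 0 ≤ (12 * K ^ 3 + 24 * K + 48 * K ^ 2 * M) * i2 := by positivity
    have v2 : 0 ≤ (24 * K + 48 * K ^ 2 * M) * j4 := by positivity
    have v3 : 0 ≤ 12 * K ^ 3 * j3 := by positivity
    have v4 : 0 ≤ 12 * K ^ 3 + 23 * K + 48 * K ^ 2 * M := by positivity
    linarith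
  · -- only the second kernel is active
    rw [Kker_smul_of_not_adm hN0 hadm]
    have hk2 := Kker_sq_le_one N ((N : ℝ) • x) ((N : ℝ) • (-x))
    have hle : Kker N ((N : ℝ) • x) ((N : ℝ) • (-x)) ^ 2 *
        (P g2 / (g2 * (g2 + 1) * Q g2 ^ 2)) ≤ K / g2 :=
      (mul_le_of_le_one_left hB0 hk2).trans hB
    rw [zero_pow two_ne_zero, zero_mul, zero_sub, abs_neg, abs_of_nonneg (by positivity)]
    refine hle.trans ?_
    have hmain : K / g2 ≤ 24 * K * (1 + (Metric.closedBall κ (N : ℝ)⁻¹).indicator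
        (fun _ => (N : ℝ) ^ 2) x) := by
      by_cases hb : 1 ≤ N * √(rnsq (κ - x))
      · -- here `|κ - x| > 1` or `|κ| > 1`, which keeps `Γ₂` away from zero
        have hquarter : 1 / 4 ≤ g2 := by
          have hbig : 1 < √(rnsq x) + √(rnsq κ) := by
            by_contra hcon
            refine hadm ⟨hx.1, hx.2, hb, by linarith, ?_⟩
            rw [add_sub_cancel]; linarith
          rw [hg2, ← hsa, ← hse]
          nlinarith [sq_nonneg (2 * √(rnsq x) - √(rnsq κ))]
        calc K / g2 ≤ K / (1 / 4) := by gcongr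
          _ ≤ 24 * K * (1 + 0) := by linarith
          _ ≤ _ := by gcongr
      · have hmem : x ∈ Metric.closedBall κ (N : ℝ)⁻¹ := by
          rw [Metric.mem_closedBall, dist_eq_norm, ← norm_neg, neg_sub]
          refine hnb.trans ?_
          rw [← one_div, le_div_iff₀ hN']
          linarith
        rw [Set.indicator_of_mem hmem, div_le_iff₀ hg2p]
        nlinarith
    refine hmain.trans ?_
    unfold domi
    rw [hball]
    set j3 := prof (√(rnsq κ)) ‖x‖
    set j4 := prof (√m) ‖x‖
    set i2 := (Metric.closedBall κ (N : ℝ)⁻¹).indicator (fun _ => (N : ℝ) ^ 2) x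
    have v : 24 * K * (1 + i2) ≤ (12 * K ^ 3 + 24 * K + 48 * K ^ 2 * M) * (1 + i2) := by
      gcongr; linarith
    have v2 : 0 ≤ (12 * K ^ 3 + 24 * K + 48 * K ^ 2 * M) * (j3 + j4) := by positivity
    linarith

/-- The second integrand is bounded by `K N²` and supported in the unit ball. -/
lemma second_le {N : ℕ} (hN : 2 ≤ N) (x : ℝ × ℝ) {K g2 p q : ℝ} (hK : 1 ≤ K)
    (hg2 : rnsq x ≤ g2) (hpq : 1 ≤ (N : ℝ) ^ 2 * g2 → 0 ≤ p ∧ p ≤ K ∧ 1 ≤ q) :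
    |Kker N ((N : ℝ) • x) ((N : ℝ) • (-x)) ^ 2 * (p / (g2 * (g2 + 1) * q ^ 2))| ≤
      (Metric.closedBall (0 : ℝ × ℝ) 1).indicator (fun _ => K * (N : ℝ) ^ 2) x := by
  have hN0 : 0 < N := by omega
  by_cases hx : 1 ≤ N * √(rnsq x) ∧ √(rnsq x) ≤ 1
  · have hNa : 1 ≤ (N : ℝ) ^ 2 * rnsq x := by
      rw [← Real.sq_sqrt (rnsq_nonneg x), ← mul_pow]; exact one_le_pow₀ hx.1
    have hNg2 : 1 ≤ (N : ℝ) ^ 2 * g2 := hNa.trans (by gcongr)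
    have hg2p : 0 < g2 := by
      by_contra h
      nlinarith [sq_nonneg (N : ℝ)]
    obtain ⟨hp, hp', hq⟩ := hpq hNg2
    have hB := fraction_two_le hg2p hp hp' hq
    have hB0 : 0 ≤ p / (g2 * (g2 + 1) * q ^ 2) := by positivity
    rw [Set.indicator_of_mem (by simpa using (norm_le_sqrt_rnsq x).trans hx.2),
      abs_of_nonneg (by positivity)]
    refine (mul_le_of_le_one_left hB0 (Kker_sq_le_one _ _ _)).trans (hB.trans ?_)
    rw [div_le_iff₀ hg2p]
    nlinarith
  · rw [Kker_smul_of_not_adm hN0 (mt (adm_neg_iff N x).1 hx)]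
    norm_num
    exact Set.indicator_nonneg (fun _ _ => by positivity) x

/-! ### Measurability and conclusion -/

/-- Only the values of `F` on `[0, ∞)` enter, where `F` is continuous. -/
lemma measurable_comp_of_diff {F : ℝ → ℝ} {u : ℝ × ℝ → ℝ}
    (hd : ∀ y ∈ Set.Ici (0:ℝ), DifferentiableWithinAt ℝ F (Set.Ici 0) y)
    (hu : Measurable u) (hu0 : ∀ x, 0 ≤ u x) : Measurable fun x => F (u x) := by
  have hc : ContinuousOn F (Set.Ici 0) := fun y hy => (hd y hy).continuousWithinAt
  have h : Continuous fun y => F (max 0 y) :=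
    hc.comp_continuous (by fun_prop) fun y => le_max_left 0 y
  have he : (fun x => F (u x)) = fun x => (fun y => F (max 0 y)) (u x) := by
    funext x
    simp only [max_eq_right (hu0 x)]
  rw [he]
  exact h.measurable.comp hu

/-- Domination of `f - g` and of `g` gives integrability of both and bounds the difference of
their integrals. -/
lemma abs_integral_sub_le {f g D B : ℝ × ℝ → ℝ} (hf : Measurable f) (hg : Measurable g)
    (hD : Integrable D) (hB : Integrable B) (hfg : ∀ x, |f x - g x| ≤ D x)
    (hgB : ∀ x, |g x| ≤ B x) : |(∫ x, f x) - ∫ x, g x| ≤ ∫ x, D x := by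
  have ig : Integrable g :=
    hB.mono' hg.aestronglyMeasurable (Filter.Eventually.of_forall hgB)
  have ifg : Integrable fun x => f x - g x :=
    hD.mono' (hf.sub hg).aestronglyMeasurable (Filter.Eventually.of_forall hfg)
  have hif : Integrable f := (ifg.add ig).congr
    (Filter.Eventually.of_forall fun x => sub_add_cancel (f x) (g x))
  rw [← integral_sub hif ig]
  exact norm_integral_le_of_norm_le (f := fun x => f x - g x) hD
    (Filter.Eventually.of_forall hfg)

theorem stmt9 (c K : ℝ) (hc : 0 < c) (hK : 1 ≤ K) :
    ∃ C : ℝ, ∀ H Hp : ℝ → ℝ,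
      (∀ y : ℝ, 0 ≤ y → 1 ≤ H y) →
      (∀ y : ℝ, 0 ≤ y → 0 ≤ Hp y) →
      (∀ y ∈ Set.Ici (0:ℝ), DifferentiableWithinAt ℝ H (Set.Ici 0) y) →
      (∀ y ∈ Set.Ici (0:ℝ), DifferentiableWithinAt ℝ Hp (Set.Ici 0) y) →
      (∀ y ∈ Set.Icc (0:ℝ) (2 * c),
        |H y| ≤ K ∧ |derivWithin H (Set.Ici 0) y| ≤ K ∧
          |Hp y| ≤ K ∧ |derivWithin Hp (Set.Ici 0) y| ≤ K) →
      ∀ N : ℕ, 2 ≤ N → ∀ μ : ℝ, 0 ≤ μ →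
      ∀ (n : ℕ) (k : Fin (n + 1) → ℤ × ℤ), (∀ i, k i ≠ 0) →
        |(∫ x : ℝ × ℝ,
              (Kker N ((N : ℝ) • x) (latR (k 0) - (N : ℝ) • x)) ^ 2 *
                ((μ / (N : ℝ) ^ 2 +
                      Gam N (k 0) (∑ i, nsq (k i) - nsq (k 0)) x *
                        Hp (LN c N ((N : ℝ) ^ 2 *
                          Gam1 N μ (k 0) (∑ i, nsq (k i) - nsq (k 0)) x))) /
                  (μ / (N : ℝ) ^ 2 +
                      Gam N (k 0) (∑ i, nsq (k i) - nsq (k 0)) x *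
                        H (LN c N ((N : ℝ) ^ 2 *
                          Gam1 N μ (k 0) (∑ i, nsq (k i) - nsq (k 0)) x))) ^ 2)) -
            ∫ x : ℝ × ℝ,
              (Kker N ((N : ℝ) • x) (-((N : ℝ) • x))) ^ 2 *
                (Hp (LN c N ((N : ℝ) ^ 2 * Gam2 N μ (∑ i, nsq (k i)) x)) /
                  (Gam2 N μ (∑ i, nsq (k i)) x * (Gam2 N μ (∑ i, nsq (k i)) x + 1) *
                    (H (LN c N ((N : ℝ) ^ 2 * Gam2 N μ (∑ i, nsq (k i)) x))) ^ 2))| ≤ C := by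
  have hc0 := hc.le
  set C0 := 12 * K ^ 3 + 24 * K + 48 * K ^ 2 * (K * c) with hC0
  refine ⟨C0 * (2 * volume.real (Metric.ball (0 : ℝ × ℝ) 1) + 2 * ∫ x : ℝ × ℝ, prof 1 ‖x‖), ?_⟩
  intro H Hp hH hHp hdH hdHp hbd N hN μ hμ n k _
  have hN0 : 0 < N := by omega
  have hN' : (0 : ℝ) < N := by exact_mod_cast hN0
  set κ : ℝ × ℝ := ((N : ℝ))⁻¹ • latR (k 0) with hκ
  set tail : ℝ := ∑ i, nsq (k i) - nsq (k 0) with htail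
  have htail0 : 0 ≤ tail := sub_nonneg.2 <|
    Finset.single_le_sum (f := fun i => nsq (k i)) (fun i _ => by unfold nsq; positivity)
      (Finset.mem_univ 0)
  have hm : 0 ≤ μ / (N : ℝ) ^ 2 := by positivity
  have hβ : 0 ≤ tail / (N : ℝ) ^ 2 := by positivity
  have hrκ : rnsq κ = nsq (k 0) / (N : ℝ) ^ 2 := by
    rw [hκ, rnsq_smul]; simp only [rnsq, nsq, latR]; field_simp
  have hlat : ∀ x : ℝ × ℝ, latR (k 0) - (N : ℝ) • x = (N : ℝ) • (κ - x) := fun x => by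
    rw [hκ, smul_sub, smul_inv_smul₀ hN'.ne']
  have hGam : ∀ x, Gam N (k 0) tail x = (rnsq x + rnsq (κ - x) + tail / (N : ℝ) ^ 2) / 2 :=
    fun x => rfl
  have hGam2 : ∀ x, Gam2 N μ (∑ i, nsq (k i)) x =
      rnsq x + (μ / (N : ℝ) ^ 2 + (rnsq κ + tail / (N : ℝ) ^ 2) / 2) := fun x => by
    rw [hrκ, htail]; unfold Gam2; field_simp; ring
  have hGam0 : ∀ x, 0 ≤ Gam N (k 0) tail x := fun x => by
    rw [hGam]; have := rnsq_nonneg x; have := rnsq_nonneg (κ - x); positivity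
  have hGam10 : ∀ x, 0 ≤ Gam1 N μ (k 0) tail x := fun x => add_nonneg hm (hGam0 x)
  have hGam2a : ∀ x, rnsq x ≤ Gam2 N μ (∑ i, nsq (k i)) x := fun x => by
    rw [hGam2]; have := rnsq_nonneg κ
    exact le_add_of_nonneg_right (by positivity)
  have hGam20 : ∀ x, 0 ≤ Gam2 N μ (∑ i, nsq (k i)) x := fun x => (rnsq_nonneg x).trans (hGam2a x)
  have hmr := measurable_rnsq
  have hmG : Measurable (Gam N (k 0) tail) := by unfold Gam; fun_prop
  have hmG1 : Measurable (Gam1 N μ (k 0) tail) := by unfold Gam1; fun_prop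
  have hmG2 : Measurable (Gam2 N μ (∑ i, nsq (k i))) := by unfold Gam2; fun_prop
  have hmL : Measurable (LN c N) := by unfold LN; fun_prop
  have hmL1 : Measurable fun x => LN c N ((N : ℝ) ^ 2 * Gam1 N μ (k 0) tail x) := by fun_prop
  have hmL2 : Measurable fun x => LN c N ((N : ℝ) ^ 2 * Gam2 N μ (∑ i, nsq (k i)) x) := by fun_prop
  have hL1 : ∀ x, 0 ≤ LN c N ((N : ℝ) ^ 2 * Gam1 N μ (k 0) tail x) := fun x =>
    LN_nonneg hc0 hN (mul_nonneg (by positivity) (hGam10 x))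
  have hL2 : ∀ x, 0 ≤ LN c N ((N : ℝ) ^ 2 * Gam2 N μ (∑ i, nsq (k i)) x) := fun x =>
    LN_nonneg hc0 hN (mul_nonneg (by positivity) (hGam20 x))
  have hmH1 := measurable_comp_of_diff hdH hmL1 hL1
  have hmHp1 := measurable_comp_of_diff hdHp hmL1 hL1
  have hmH2 := measurable_comp_of_diff hdH hmL2 hL2
  have hmHp2 := measurable_comp_of_diff hdHp hmL2 hL2
  have hmK1 : Measurable fun x : ℝ × ℝ => Kker N ((N : ℝ) • x) (latR (k 0) - (N : ℝ) • x) :=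
    (measurable_Kker N).comp (f := fun x : ℝ × ℝ => ((N : ℝ) • x, latR (k 0) - (N : ℝ) • x))
      (by fun_prop)
  have hmK2 : Measurable fun x : ℝ × ℝ => Kker N ((N : ℝ) • x) (-((N : ℝ) • x)) :=
    (measurable_Kker N).comp (f := fun x : ℝ × ℝ => ((N : ℝ) • x, -((N : ℝ) • x)))
      (by fun_prop)
  have hP : ∀ γ, 1 ≤ (N : ℝ) ^ 2 * γ → 0 ≤ Hp (LN c N ((N : ℝ) ^ 2 * γ)) ∧
      Hp (LN c N ((N : ℝ) ^ 2 * γ)) ≤ K := fun γ hγ =>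
    ⟨hHp _ (LN_mem hc0 hN hγ).1, (abs_le.1 (hbd _ (LN_mem hc0 hN hγ)).2.2.1).2⟩
  have hQ : ∀ γ, 1 ≤ (N : ℝ) ^ 2 * γ → 1 ≤ H (LN c N ((N : ℝ) ^ 2 * γ)) ∧
      H (LN c N ((N : ℝ) ^ 2 * γ)) ≤ K := fun γ hγ =>
    ⟨hH _ (LN_mem hc0 hN hγ).1, (abs_le.1 (hbd _ (LN_mem hc0 hN hγ)).1).2⟩
  have hlip : ∀ F : ℝ → ℝ,
      (∀ y ∈ Set.Ici (0:ℝ), DifferentiableWithinAt ℝ F (Set.Ici 0) y) →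
      (∀ y ∈ Set.Icc (0:ℝ) (2 * c), |derivWithin F (Set.Ici 0) y| ≤ K) →
      ∀ t γ δ, 0 < t → t ≤ γ → t ≤ δ → 1 ≤ (N : ℝ) ^ 2 * γ → 1 ≤ (N : ℝ) ^ 2 * δ →
      t * |F (LN c N ((N : ℝ) ^ 2 * γ)) - F (LN c N ((N : ℝ) ^ 2 * δ))| ≤ K * c * |γ - δ| := by
    intro F hF hF' t γ δ ht h1 h2 h3 h4
    have a1 := lip_of_derivWithin hF hF' (LN_mem hc0 hN h3) (LN_mem hc0 hN h4)
    have a2 := LN_lip hc0 hN ht h1 h2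
    calc _ ≤ t * (K * |LN c N ((N : ℝ) ^ 2 * γ) - LN c N ((N : ℝ) ^ 2 * δ)|) := by gcongr
      _ = K * (t * |LN c N ((N : ℝ) ^ 2 * γ) - LN c N ((N : ℝ) ^ 2 * δ)|) := by ring
      _ ≤ K * (c * |γ - δ|) := by gcongr
      _ = _ := by ring
  have hpt := fun x => pointwise_le hN κ x hK (by positivity : 0 ≤ K * c) hm hβ hP hQ
    (hlip Hp hdHp fun y hy => (hbd y hy).2.2.2) (hlip H hdH fun y hy => (hbd y hy).2.1)
    (hGam x) (hGam2 x)
  have hpt2 := fun x => second_le hN x hK (hGam2a x) fun h =>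
    ⟨(hP _ h).1, (hP _ h).2, (hQ _ h).1⟩
  simp only [smul_neg, ← hlat] at hpt hpt2
  have hDint := (integrable_domi N κ (μ / (N : ℝ) ^ 2)).const_mul C0
  have hBint : Integrable ((Metric.closedBall (0 : ℝ × ℝ) 1).indicator
      fun _ => K * (N : ℝ) ^ 2) :=
    (integrable_indicator_iff Metric.isClosed_closedBall.measurableSet).2
      (integrableOn_const measure_closedBall_lt_top.ne)
  refine (abs_integral_sub_le
    ((hmK1.pow_const 2).mul
      (((hmG.mul hmHp1).const_add _).div (((hmG.mul hmH1).const_add _).pow_const 2)))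
    ((hmK2.pow_const 2).mul (hmHp2.div ((hmG2.mul (hmG2.add_const 1)).mul (hmH2.pow_const 2))))
    hDint hBint hpt hpt2).trans ?_
  rw [integral_const_mul]
  exact mul_le_mul_of_nonneg_left (integral_domi_le hN0 κ _) (by positivity)
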